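/- Suppose g, h ∈ G(F,F') are hyperbolic, translation compatible, and weakly asymptotic (λ_g(v) = λ_h(v) for all vertices v). Then h and hg are weakly asymptotic, i.e., λ_{hg}(v) = λ_h(v) for all v ∈ V(T). -/

import Mathlib

/-- `p : ℤ → V` is a translation axis for `g` with translation length `l ≥ 1`. -/
def IsTransAxis {V : Type*} (T : SimpleGraph V) (g : Equiv.Perm V) (p : ℤ → V) (l : ℕ) :
    Prop :=
  Function.Injective p ∧ (∀ i : ℤ, T.Adj (p i) (p (i + 1))) ∧ 1 ≤ l ∧
    ∀ i : ℤ, g (p i) = p (i + l)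

/-- Two parametrized axes are translation compatible. -/
def TransCompat {V : Type*} (p q : ℤ → V) : Prop :=
  ∀ i j i' j' : ℤ, p i = q i' → p j = q j' → (i ≤ j ↔ i' ≤ j')


namespace WA

/-- `H` is the half-tree at the oriented edge `(a,b)`, containing `b`. -/
structure IsHalf {V : Type*} (T : SimpleGraph V) (a b : V) (H : Set V) : Prop where
  bm : b ∈ H
  am : a ∉ H
  cross : ∀ u v, u ∈ H → v ∉ H → T.Adj u v → u = b ∧ v = a

theorem exists_half {V : Type*} {T : SimpleGraph V} (hT : T.IsTree) {a b : V}
    (hab : T.Adj a b) : ∃ H, IsHalf T a b H := by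
  have hbr := (SimpleGraph.isAcyclic_iff_forall_adj_isBridge.1 hT.isAcyclic) hab
  rw [SimpleGraph.isBridge_iff] at hbr
  have hbr : ¬ (T.deleteEdges {s(a, b)}).Reachable a b := by
    first
    | exact hbr
    | exact hbr.2
  refine ⟨{v | (T.deleteEdges {s(a, b)}).Reachable v b}, SimpleGraph.Reachable.refl _, hbr, ?_⟩
  intro u v hu hv huv
  by_cases he : s(u, v) = s(a, b)
  · rw [Sym2.eq_iff] at he
    rcases he with ⟨rfl, rfl⟩ | ⟨rfl, rfl⟩
    · exact absurd hu hbr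
    · exact ⟨rfl, rfl⟩
  · exfalso
    apply hv
    have : (T.deleteEdges {s(a, b)}).Adj v u := by
      rw [SimpleGraph.deleteEdges_adj]
      refine ⟨huv.symm, ?_⟩
      rw [Sym2.eq_swap (a := v)]
      exact he
    exact this.reachable.trans hu

theorem walk_closed {V : Type*} {T : SimpleGraph V} {S : Set V}
    (hS : ∀ u v, u ∈ S → T.Adj u v → v ∈ S) {x y : V} (w : T.Walk x y) :
    x ∈ S → y ∈ S := by
  induction w with
  | nil => exact id
  | cons h _ ih => exact fun hx => ih (hS _ _ hx h)

theorem nested {V : Type*} {T : SimpleGraph V} (hT : T.IsTree) {a b a' b' : V} {H H' : Set V}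
    (h1 : IsHalf T a b H) (h2 : IsHalf T a' b' H') (ha : a ∉ H') (hb : b' ∈ H) : H' ⊆ H := by
  intro v hv
  by_contra hvH
  obtain ⟨w⟩ := hT.connected.preconnected v b'
  have := walk_closed (S := H' \ H) (T := T) ?_ w ⟨hv, hvH⟩
  · exact this.2 hb
  · rintro x y ⟨hx, hx'⟩ hxy
    have hy : y ∈ H' := by
      by_contra hy
      have := (h2.cross x y hx hy hxy).1
      exact hx' (this ▸ hb)
    refine ⟨hy, fun hyH => ?_⟩
    have := (h1.cross y x hyH hx' hxy.symm).2
    exact ha (this ▸ hx)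

theorem IsHalf.compl {V : Type*} {T : SimpleGraph V} {a b : V} {H : Set V}
    (h : IsHalf T a b H) : IsHalf T b a Hᶜ :=
  ⟨h.am, fun hb => hb h.bm, fun u v hu hv huv => by
    have hv : v ∈ H := by simpa using hv
    exact (h.cross v u hv hu huv.symm).symm⟩

/-- automorphisms -/
def Aut {V : Type*} (T : SimpleGraph V) (t : Equiv.Perm V) : Prop :=
  ∀ u w : V, T.Adj u w ↔ T.Adj (t u) (t w)

theorem Aut.mul {V : Type*} {T : SimpleGraph V} {s t : Equiv.Perm V} (hs : Aut T s)
    (ht : Aut T t) : Aut T (s * t) := fun u w => (ht u w).trans (hs _ _)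

theorem Aut.one {V : Type*} {T : SimpleGraph V} : Aut T 1 := fun _ _ => Iff.rfl

theorem Aut.inv {V : Type*} {T : SimpleGraph V} {t : Equiv.Perm V}
    (ht : Aut T t) : Aut T t⁻¹ := fun u w => by
  rw [ht (t⁻¹ u) (t⁻¹ w)]; simp

theorem Aut.pow {V : Type*} {T : SimpleGraph V} {t : Equiv.Perm V}
    (ht : Aut T t) (n : ℕ) : Aut T (t ^ n) := by
  induction n with
  | zero => exact Aut.one
  | succ n ih => rw [pow_succ]; exact ih.mul ht

theorem IsHalf.image {V : Type*} {T : SimpleGraph V} {a b : V} {H : Set V}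
    (h : IsHalf T a b H) {t : Equiv.Perm V} (ht : Aut T t) :
    IsHalf T (t a) (t b) (t '' H) := by
  refine ⟨⟨b, h.bm, rfl⟩, ?_, ?_⟩
  · rintro ⟨x, hx, hxa⟩
    exact h.am (t.injective hxa ▸ hx)
  · rintro _ v ⟨x, hx, rfl⟩ hv hadj
    obtain ⟨y, rfl⟩ := t.surjective v
    have hy : y ∉ H := fun hy => hv ⟨y, hy, rfl⟩
    obtain ⟨rfl, rfl⟩ := h.cross x y hx hy ((ht _ _).2 hadj)
    exact ⟨rfl, rfl⟩

theorem walk_cross {V : Type*} {T : SimpleGraph V} {a b : V} {H : Set V}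
    (h : IsHalf T a b H) {x y : V} (w : T.Walk x y) :
    x ∈ H → y ∉ H → T.dist x b + 1 ≤ w.length := by
  induction w with
  | nil => exact fun h1 h2 => absurd h1 h2
  | @cons u v z huv w ih =>
    intro hu hz
    by_cases hv : v ∈ H
    · have h1 := ih hv hz
      have hvb : T.Reachable v b := by
        by_contra hn
        -- `w` crosses at `b`
        have := walk_closed (S := {x | x ∈ H ∧ ¬ T.Reachable x b}) (T := T) ?_ w ⟨hv, hn⟩
        · exact hz this.1
        · rintro x y ⟨hx, hx'⟩ hxy
          refine ⟨?_, fun hr => hx' (hxy.reachable.trans hr)⟩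
          by_contra hy
          have := (h.cross x y hx hy hxy).1
          exact hx' (this ▸ SimpleGraph.Reachable.refl _)
      obtain ⟨q, hq⟩ := hvb.exists_walk_length_eq_dist
      have h2 := SimpleGraph.dist_le (SimpleGraph.Walk.cons huv q)
      simp only [SimpleGraph.Walk.length_cons] at h2 ⊢
      omega
    · obtain ⟨rfl, rfl⟩ := h.cross u v hu hv huv
      simp

theorem dist_cross {V : Type*} {T : SimpleGraph V} (hT : T.IsTree) {a b : V} {H : Set V}
    (h : IsHalf T a b H) {x y : V} (hx : x ∈ H) (hy : y ∉ H) :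
    T.dist x b + 1 ≤ T.dist x y := by
  obtain ⟨w, hw⟩ := (hT.connected.preconnected x y).exists_walk_length_eq_dist
  rw [← hw]
  exact walk_cross h w hx hy

theorem dist_aut {V : Type*} {T : SimpleGraph V} (hT : T.IsTree) {t : Equiv.Perm V}
    (ht : Aut T t) (x y : V) : T.dist x y ≤ T.dist (t x) (t y) := by
  have key : ∀ {x y : V} (w : T.Walk x y), T.dist (t⁻¹ x) (t⁻¹ y) ≤ w.length := by
    intro x y w
    induction w with
    | nil => simp
    | @cons u v z huv w ih =>
      have := (ht.inv u v).1 huv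
      obtain ⟨q, hq⟩ := (hT.connected.preconnected (t⁻¹ v) (t⁻¹ z)).exists_walk_length_eq_dist
      have h2 := SimpleGraph.dist_le (SimpleGraph.Walk.cons this q)
      simp only [SimpleGraph.Walk.length_cons] at h2 ⊢
      omega
  obtain ⟨w, hw⟩ := (hT.connected.preconnected (t x) (t y)).exists_walk_length_eq_dist
  rw [← hw]
  simpa using key w

/-- Backward orbits leave the half-tree. -/
theorem leaves {V : Type*} {T : SimpleGraph V} (hT : T.IsTree) {a b : V} {H : Set V}
    (h : IsHalf T a b H) {t : Equiv.Perm V} (ht : Aut T t) (hb : b ∉ t '' H) (u : V) :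
    ∃ m : ℕ, (t⁻¹ ^ m) u ∉ H := by
  by_contra hcon
  push Not at hcon
  have key : ∀ m : ℕ, T.dist ((t⁻¹ ^ m) u) b + m ≤ T.dist u b := by
    intro m
    induction m with
    | zero => simp
    | succ m ih =>
      have e : t ((t⁻¹ ^ (m+1)) u) = (t⁻¹ ^ m) u := by
        rw [pow_succ']; simp
      have h1 : (t⁻¹ ^ m) u ∈ t '' H := ⟨_, hcon (m+1), e⟩
      have h2 := dist_cross hT (h.image ht) h1 hb
      have h3 := dist_aut hT ht ((t⁻¹ ^ (m+1)) u) b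
      rw [e] at h3
      omega
  have := key (T.dist u b + 1)
  omega

theorem enters {V : Type*} {T : SimpleGraph V} (hT : T.IsTree) {a b : V} {H : Set V}
    (h : IsHalf T a b H) {t : Equiv.Perm V} (ht : Aut T t) (ha : t a ∈ H) (u : V) :
    ∃ m : ℕ, (t ^ m) u ∈ H := by
  obtain ⟨m, hm⟩ := leaves hT h.compl ht.inv (by
    rintro ⟨x, hx, hxa⟩
    apply hx
    have : x = t a := by rw [← hxa]; simp
    rw [this]; exact ha) u
  refine ⟨m, ?_⟩
  simpa using hm

theorem pow_mem {V : Type*} {H : Set V} {t : Equiv.Perm V} (ht : ∀ x ∈ H, t x ∈ H) {x : V}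
    (m : ℕ) (hx : x ∈ H) : (t ^ m) x ∈ H := by
  induction m with
  | zero => exact hx
  | succ m ih => rw [pow_succ']; exact ht _ ih

theorem mem_of_le {V : Type*} {H : Set V} {t : Equiv.Perm V} (ht : ∀ x ∈ H, t x ∈ H) {x : V}
    {m n : ℕ} (hmn : m ≤ n) (hx : (t ^ m) x ∈ H) : (t ^ n) x ∈ H := by
  obtain ⟨k, rfl⟩ := Nat.exists_eq_add_of_le' hmn
  rw [pow_add]
  exact pow_mem ht k hx

theorem axis_mem {V : Type*} {T : SimpleGraph V} {p : ℤ → V} (hinj : Function.Injective p)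
    (hadj : ∀ i : ℤ, T.Adj (p i) (p (i + 1))) {i : ℤ} {H : Set V}
    (h : IsHalf T (p i) (p (i + 1)) H) (j : ℤ) : p j ∈ H ↔ i < j := by
  have up : ∀ n : ℕ, p (i + 1 + n) ∈ H := by
    intro n
    induction n with
    | zero => simpa using h.bm
    | succ n ih =>
      by_contra hn
      push_cast at hn
      rw [← add_assoc] at hn
      have := hinj (h.cross _ _ ih hn (hadj _)).2
      omega
  have down : ∀ n : ℕ, p (i - n) ∉ H := by
    intro n
    induction n with
    | zero => simpa using h.am
    | succ n ih =>
      intro hn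
      have e : i - (n : ℤ) = i - ((n + 1 : ℕ) : ℤ) + 1 := by push_cast; ring
      rw [e] at ih
      have := hinj (h.cross _ _ hn ih (hadj _)).1
      push_cast at this
      omega
  constructor
  · intro hj
    by_contra hlt
    obtain ⟨n, hn⟩ := Int.eq_ofNat_of_zero_le (show 0 ≤ i - j by omega)
    have := down n
    rw [← hn] at this
    exact this (by simpa using hj)
  · intro hlt
    obtain ⟨n, hn⟩ := Int.eq_ofNat_of_zero_le (show 0 ≤ j - (i + 1) by omega)
    have := up n
    rw [← hn] at this
    simpa using this

/-- `g` shifts the half-trees along its axis. -/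
theorem axis_shift {V : Type*} {T : SimpleGraph V} (hT : T.IsTree) {g : Equiv.Perm V}
    (hg : Aut T g) {p : ℤ → V} {l : ℕ}
    (hp : IsTransAxis T g p l) {i i' : ℤ} (hi : i' ≤ i + 1) {H H' : Set V}
    (h : IsHalf T (p i) (p (i + 1)) H) (h' : IsHalf T (p i') (p (i' + 1)) H') :
    g '' H ⊆ H' := by
  obtain ⟨hinj, hadj, hl, htr⟩ := hp
  apply nested hT h' (h.image hg)
  · rintro ⟨x, hx, hxi⟩
    have : x = p (i' - l) := by
      apply g.injective
      rw [hxi, htr]; congr 1; ring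
    rw [this, axis_mem hinj hadj h] at hx
    omega
  · rw [htr, axis_mem hinj hadj h']
    omega

/-- A bi-infinite path avoiding the edges of an axis has a projection. -/
theorem exists_gap {V : Type*} {T : SimpleGraph V} (hT : T.IsTree) {g : Equiv.Perm V}
    (hg : Aut T g) {p q : ℤ → V} {l : ℕ} (hp : IsTransAxis T g p l)
    (hq : ∀ i : ℤ, T.Adj (q i) (q (i + 1)))
    (hno : ∀ i j, ¬ (p i = q j ∧ p (i + 1) = q (j + 1)))
    (hno' : ∀ i j, ¬ (p i = q (j + 1) ∧ p (i + 1) = q j)) :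
    ∃ (i : ℤ) (H H' : Set V), IsHalf T (p i) (p (i + 1)) H ∧
      IsHalf T (p (i + 1)) (p (i + 1 + 1)) H' ∧ (∀ j, q j ∈ H) ∧ (∀ j, q j ∉ H') := by
  have hp' := hp
  obtain ⟨hinj, hadj, hl, htr⟩ := hp'
  choose H hH using fun i => exists_half hT (hadj i)
  have mono : ∀ i j, i ≤ j → H j ⊆ H i := fun i j hij =>
    nested hT (hH i) (hH j) (by rw [axis_mem hinj hadj (hH j)]; omega)
      (by rw [axis_mem hinj hadj (hH i)]; omega)
  have step : ∀ i j, q j ∈ H i ↔ q (j + 1) ∈ H i := by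
    intro i j
    constructor
    · intro h1
      by_contra h2
      have := (hH i).cross _ _ h1 h2 (hq j)
      exact hno' i j ⟨this.2.symm, this.1.symm⟩
    · intro h1
      by_contra h2
      have := (hH i).cross _ _ h1 h2 (hq j).symm
      exact hno i j ⟨this.2.symm, this.1.symm⟩
  have all : ∀ i j, q j ∈ H i ↔ q 0 ∈ H i := by
    intro i j
    induction j using Int.induction_on with
    | zero => rfl
    | succ n ih => rw [← ih, ← step]
    | pred n ih =>
      rw [← ih, step]; congr! 2; ring
  have gpow : ∀ (m : ℕ) (x : V), x ∈ H 0 ↔ (g ^ m) x ∈ H (m * l) := by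
    intro m x
    have e : ∀ (m : ℕ) i, (g ^ m) (p i) = p (i + m * l) := by
      intro m
      induction m with
      | zero => simp
      | succ m ih =>
        intro i
        rw [pow_succ, Equiv.Perm.mul_apply, htr, ih]; congr 1; push_cast; ring
    have h1 := (hH 0).image (hg.pow m)
    rw [e, e] at h1
    have e1 : (0 : ℤ) + m * l = m * l := by ring
    have e2 : (0 : ℤ) + 1 + m * l = m * l + 1 := by ring
    rw [e1, e2] at h1
    have h2 := hH (m * l)
    have : (g ^ m) '' H 0 = H (m * l) :=
      Set.Subset.antisymm (nested hT h2 h1 h1.am h2.bm) (nested hT h1 h2 h2.am h1.bm)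
    rw [← this]
    simp
  -- upper bound
  obtain ⟨m, hm⟩ := leaves hT (hH 0) hg (by
    rintro ⟨x, hx, hxi⟩
    have : x = p (0 + 1 - l) := by
      apply g.injective
      rw [hxi, htr]; congr 1; ring
    rw [this, axis_mem hinj hadj (hH 0)] at hx
    omega) (q 0)
  have hub : q 0 ∉ H (m * l) := by
    rw [gpow m] at hm
    simpa using hm
  have hlb : ∃ i, q 0 ∈ H i := by
    by_contra hcon
    push Not at hcon
    -- distance to the axis point decreases
    have key : ∀ n : ℕ, T.dist (q 0) (p (-n)) + n ≤ T.dist (q 0) (p 0) := by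
      intro n
      induction n with
      | zero => simp
      | succ n ih =>
        have h1 := dist_cross hT (hH (-(n + 1 : ℕ))).compl (hcon _)
          (fun hc => hc (hH (-(n + 1 : ℕ))).bm)
        have e : -((n + 1 : ℕ) : ℤ) + 1 = -n := by push_cast; ring
        rw [e] at h1
        omega
    have := key (T.dist (q 0) (p 0) + 1)
    omega
  obtain ⟨i, hi, hmax⟩ := Int.exists_greatest_of_bdd (P := fun i => q 0 ∈ H i)
    ⟨m * l, fun z hz => by
      by_contra hlt
      exact hub (mono _ _ (by omega) hz)⟩ hlb
  refine ⟨i, H i, H (i + 1), hH i, hH (i + 1), fun j => (all i j).2 hi, fun j hj => ?_⟩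
  have := hmax _ ((all (i + 1) j).1 hj)
  omega

/-- The half-tree shifted by both `g` and `h * g`. -/
theorem exists_good {V : Type*} {T : SimpleGraph V} (hT : T.IsTree) {g h : Equiv.Perm V}
    (hg : Aut T g) (hh : Aut T h) {pg ph : ℤ → V} {lg lh : ℕ}
    (hpg : IsTransAxis T g pg lg) (hph : IsTransAxis T h ph lh)
    (hcomp : TransCompat pg ph) :
    ∃ (a b : V) (H : Set V), IsHalf T a b H ∧ (∀ x ∈ H, g x ∈ H) ∧ g a ∈ H ∧
      (∀ x ∈ H, (h * g) x ∈ H) ∧ (h * g) a ∈ H ∧ b ∉ (h * g) '' H := by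
  have hno' : ∀ i j, ¬ (pg i = ph (j + 1) ∧ pg (i + 1) = ph j) := by
    rintro i j ⟨h1, h2⟩
    have := hcomp i (i + 1) (j + 1) j h1 h2
    omega
  have hga : ∀ i H, IsHalf T (pg i) (pg (i + 1)) H → g (pg i) ∈ H := by
    intro i H hH
    rw [hpg.2.2.2, axis_mem hpg.1 hpg.2.1 hH]
    have := hpg.2.2.1
    omega
  by_cases hsh : ∃ i j, pg i = ph j ∧ pg (i + 1) = ph (j + 1)
  · obtain ⟨i, j, h1, h2⟩ := hsh
    obtain ⟨H, hH⟩ := exists_half hT (hpg.2.1 i)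
    have hH' := hH
    rw [h1, h2] at hH'
    have sg := axis_shift hT hg hpg (by omega) hH hH
    have sh := axis_shift hT hh hph (by omega) hH' hH'
    have sg : ∀ x ∈ H, g x ∈ H := fun x hx => sg ⟨x, hx, rfl⟩
    have sh : ∀ x ∈ H, h x ∈ H := fun x hx => sh ⟨x, hx, rfl⟩
    refine ⟨_, _, H, hH, sg, hga i H hH, fun x hx => sh _ (sg x hx), sh _ (hga i H hH), ?_⟩
    rintro ⟨x, hx, hxb⟩
    have : g x = ph (j + 1 - lh) := by
      apply h.injective
      rw [hph.2.2.2, ← Equiv.Perm.mul_apply, hxb, h2]; congr 1; ring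
    have h3 := sg x hx
    rw [this, axis_mem hph.1 hph.2.1 hH'] at h3
    have := hph.2.2.1
    omega
  · push Not at hsh
    obtain ⟨i, H, H', hH, hH', hin, hout⟩ := exists_gap hT hg hpg hph.2.1
      (fun i j hc => hsh i j hc.1 hc.2) hno'
    obtain ⟨j, K, K', hK, hK', kin, kout⟩ := exists_gap hT hh hph hpg.2.1
      (fun i j hc => hsh j i hc.1.symm hc.2.symm) (fun i j hc => hno' j i ⟨hc.2.symm, hc.1.symm⟩)
    have s1 : g '' H ⊆ H' := axis_shift hT hg hpg (by omega) hH hH'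
    have s1' : g '' H ⊆ H := axis_shift hT hg hpg (by omega) hH hH
    have s2 : H' ⊆ K := nested hT hK hH' (hout _) (kin _)
    have s3 : h '' K ⊆ K' := axis_shift hT hh hph (by omega) hK hK'
    have s4 : K' ⊆ H := nested hT hH hK' (kout _) (hin _)
    have tK : ∀ x ∈ H, (h * g) x ∈ K' := fun x hx => s3 ⟨g x, s2 (s1 ⟨x, hx, rfl⟩), rfl⟩
    refine ⟨_, _, H, hH, fun x hx => s1' ⟨x, hx, rfl⟩, hga i H hH, fun x hx => s4 (tK x hx),
      ?_, ?_⟩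
    · apply s4
      apply s3
      refine ⟨g (pg i), ?_, rfl⟩
      rw [hpg.2.2.2]
      exact kin _
    · rintro ⟨x, hx, hxb⟩
      exact kout _ (hxb ▸ tK x hx)

end WA

/-- Suppose `g, h ∈ G(F,F')` are hyperbolic, translation compatible and
weakly asymptotic (`λ_g = λ_h` pointwise, where `λ_g(u)` is the eventual value of the
coset `σ(gⁿ, g⁻ⁿ(u))·F ∈ Sym(Ω)/F`).  Then `h` and `h g` are weakly asymptotic:
`λ_{hg}(u) = λ_h(u)` for every vertex `u`. -/
theorem weaklyAsymptotic_mul {V Ω : Type*} (T : SimpleGraph V) (hT : T.IsTree)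
    (c : V → V → Ω)
    (hsym : ∀ u v : V, T.Adj u v → c u v = c v u)
    (hbij : ∀ v : V, Set.BijOn (fun u => c v u) (T.neighborSet v) Set.univ)
    (σ : Equiv.Perm V → V → Equiv.Perm Ω)
    (hσ : ∀ g : Equiv.Perm V, (∀ u w : V, T.Adj u w ↔ T.Adj (g u) (g w)) →
      ∀ v u : V, T.Adj v u → σ g v (c v u) = c (g v) (g u))
    (F F' : Subgroup (Equiv.Perm Ω)) (hFF' : F ≤ F')
    (g h : Equiv.Perm V)
    (hg : ∀ u w : V, T.Adj u w ↔ T.Adj (g u) (g w))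
    (hh : ∀ u w : V, T.Adj u w ↔ T.Adj (h u) (h w))
    (hgF' : ∀ v : V, σ g v ∈ F') (hhF' : ∀ v : V, σ h v ∈ F')
    (hgfin : {v : V | σ g v ∉ F}.Finite) (hhfin : {v : V | σ h v ∉ F}.Finite)
    (pg ph : ℤ → V) (lg lh : ℕ)
    (hpg : IsTransAxis T g pg lg) (hph : IsTransAxis T h ph lh)
    (hcomp : TransCompat pg ph)
    (Λg Λh Λhg : V → Equiv.Perm Ω ⧸ F)
    (hΛg : ∀ u : V, ∃ N : ℕ, ∀ n : ℕ, N ≤ n →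
      (QuotientGroup.mk (σ (g ^ n) ((g⁻¹ ^ n) u)) : Equiv.Perm Ω ⧸ F) = Λg u)
    (hΛh : ∀ u : V, ∃ N : ℕ, ∀ n : ℕ, N ≤ n →
      (QuotientGroup.mk (σ (h ^ n) ((h⁻¹ ^ n) u)) : Equiv.Perm Ω ⧸ F) = Λh u)
    (hΛhg : ∀ u : V, ∃ N : ℕ, ∀ n : ℕ, N ≤ n →
      (QuotientGroup.mk (σ ((h * g) ^ n) (((h * g)⁻¹ ^ n) u)) : Equiv.Perm Ω ⧸ F)
        = Λhg u)
    (hweak : ∀ u : V, Λg u = Λh u) :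
    ∀ u : V, Λhg u = Λh u := by
  have hg' : WA.Aut T g := hg
  have hh' : WA.Aut T h := hh
  have coc : ∀ s t : Equiv.Perm V, WA.Aut T s → WA.Aut T t → ∀ v,
      σ (s * t) v = σ s (t v) * σ t v := by
    intro s t hs ht v
    ext x
    obtain ⟨w, hw, rfl⟩ := (hbij v).surjOn (Set.mem_univ x)
    have hw : T.Adj v w := hw
    simp only [Equiv.Perm.mul_apply]
    rw [hσ _ (hs.mul ht) v w hw, hσ t ht v w hw, hσ s hs _ _ ((ht _ _).1 hw)]
    rfl
  have equi : ∀ (t : Equiv.Perm V) (Λ : V → Equiv.Perm Ω ⧸ F), WA.Aut T t →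
      (∀ u : V, ∃ N : ℕ, ∀ n : ℕ, N ≤ n →
        (QuotientGroup.mk (σ (t ^ n) ((t⁻¹ ^ n) u)) : Equiv.Perm Ω ⧸ F) = Λ u) →
      ∀ v, Λ (t v) = σ t v • Λ v := by
    intro t Λ ht hΛ v
    obtain ⟨N1, h1⟩ := hΛ v
    obtain ⟨N2, h2⟩ := hΛ (t v)
    rw [← h1 (max N1 N2) (le_max_left _ _), ← h2 (max N1 N2 + 1) (by omega)]
    have e1 : (t⁻¹ ^ (max N1 N2 + 1)) (t v) = (t⁻¹ ^ (max N1 N2)) v := by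
      rw [pow_succ]; simp
    rw [e1, pow_succ', coc t _ ht (ht.pow _)]
    have e2 : (t ^ (max N1 N2)) ((t⁻¹ ^ (max N1 N2)) v) = v := by simp
    rw [e2]
    rfl
  have eqg := equi g Λg hg' hΛg
  have eqh := equi h Λh hh' hΛh
  have ΛE : Λg = Λh := funext hweak
  rw [ΛE] at eqg hΛg
  have ht : WA.Aut T (h * g) := hh'.mul hg'
  obtain ⟨a, b, H, hH, gH, ga, tH, ta, tb⟩ := WA.exists_good hT hg' hh' hpg hph hcomp
  generalize htt : h * g = t at *
  have eqt : ∀ v, Λh (t v) = σ t v • Λh v := by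
    intro v
    rw [← htt, coc h g hh' hg', Equiv.Perm.mul_apply, eqh, eqg, mul_smul]
  have eqtn : ∀ (n : ℕ) v, Λh ((t ^ n) v) = σ (t ^ n) v • Λh v := by
    intro n
    induction n with
    | zero =>
      intro v
      have h1 := coc 1 1 WA.Aut.one WA.Aut.one v
      have h2 : σ 1 v = 1 := by simpa using h1
      simp [h2]
    | succ n ih =>
      intro v
      rw [pow_succ, coc _ _ (ht.pow n) ht, Equiv.Perm.mul_apply, ih, eqt, mul_smul]
  intro u
  obtain ⟨N, hN⟩ := hΛhg u
  suffices hs : ∃ n, N ≤ n ∧ Λh ((t⁻¹ ^ n) u) = QuotientGroup.mk 1 by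
    obtain ⟨n, hn, h1⟩ := hs
    have h2 := eqtn n ((t⁻¹ ^ n) u)
    have e2 : (t ^ n) ((t⁻¹ ^ n) u) = u := by simp
    rw [e2, h1] at h2
    rw [← hN n hn, h2]
    change _ = (QuotientGroup.mk (σ (t ^ n) ((t⁻¹ ^ n) u) * 1) : Equiv.Perm Ω ⧸ F)
    rw [mul_one]
  by_contra hcon
  push Not at hcon
  have triv : ∀ w, Λh w ≠ QuotientGroup.mk 1 → ∃ k : ℕ, ∃ s, σ g s ∉ F ∧ (g ^ k) s = w := by
    intro w hw
    by_contra hc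
    push Not at hc
    have hm : ∀ k : ℕ, σ g ((g⁻¹ ^ k) w) ∈ F := by
      intro k
      by_contra hk
      exact hc k _ hk (by simp)
    have hall : ∀ n : ℕ, σ (g ^ n) ((g⁻¹ ^ n) w) ∈ F := by
      intro n
      induction n with
      | zero =>
        have h1 := coc 1 1 WA.Aut.one WA.Aut.one w
        have h2 : σ 1 w = 1 := by simpa using h1
        simp [h2, F.one_mem]
      | succ n ih =>
        have e : g ((g⁻¹ ^ (n + 1)) w) = (g⁻¹ ^ n) w := by rw [pow_succ']; simp
        rw [pow_succ g, coc _ _ (hg'.pow n) hg', e]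
        exact F.mul_mem ih (hm _)
    obtain ⟨M, hM⟩ := hΛg w
    apply hw
    rw [← hM M le_rfl]
    rw [QuotientGroup.eq]
    simpa using hall M
  choose m hm using WA.enters hT hH hg' ga
  have hfin : {w | Λh w ≠ QuotientGroup.mk 1 ∧ w ∉ H}.Finite := by
    apply (hgfin.biUnion (t := fun s => (fun k : ℕ => (g ^ k) s) '' Set.Iio (m s))
      (fun s _ => (Set.finite_Iio _).image _)).subset
    rintro w ⟨hw, hwH⟩
    obtain ⟨k, s, hs, rfl⟩ := triv w hw
    refine Set.mem_biUnion (show s ∈ {v | σ g v ∉ F} from hs) ⟨k, ?_, rfl⟩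
    by_contra hk
    have hk : m s ≤ k := by simpa using hk
    exact hwH (WA.mem_of_le gH hk (hm s))
  have tHi : ∀ x ∈ Hᶜ, t⁻¹ x ∈ Hᶜ := by
    intro x hx hx'
    apply hx
    simpa using tH _ hx'
  obtain ⟨m1, hm1⟩ := WA.leaves hT hH ht tb u
  obtain ⟨m2, hm2⟩ := WA.enters hT hH ht ta u
  obtain ⟨n, n', hne, heq⟩ := Set.Finite.exists_lt_map_eq_of_forall_mem
    (f := fun n : ℕ => (t⁻¹ ^ (n + (N + m1))) u)
    (t := {w | Λh w ≠ QuotientGroup.mk 1 ∧ w ∉ H})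
    (fun n => ⟨hcon _ (by omega), WA.mem_of_le (H := Hᶜ) tHi (by omega) hm1⟩) hfin
  obtain ⟨d, rfl⟩ := Nat.exists_eq_add_of_lt hne
  have hper : (t⁻¹ ^ (d + 1)) u = u := by
    have e : n + d + 1 + (N + m1) = (n + (N + m1)) + (d + 1) := by ring
    simp only [e] at heq
    rw [pow_add _ _ (d + 1)] at heq
    exact ((t⁻¹ ^ (n + (N + m1))).injective heq).symm
  have hper2 : ∀ k : ℕ, (t⁻¹ ^ ((d + 1) * k)) u = u := by
    intro k
    induction k with
    | zero => simp
    | succ k ih => rw [mul_add, mul_one, pow_add, Equiv.Perm.mul_apply, hper, ih]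
  have hper3 : ∀ k : ℕ, (t ^ ((d + 1) * k)) u = u := by
    intro k
    conv_lhs => rw [← hper2 k]
    simp
  have c1 := WA.mem_of_le (H := Hᶜ) tHi (show m1 ≤ (d + 1) * m1 by nlinarith) hm1
  have c2 := WA.mem_of_le tH (show m2 ≤ (d + 1) * m2 by nlinarith) hm2
  rw [hper2] at c1
  rw [hper3] at c2
  exact c1 c2
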